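/- arXiv:2508.11556 — 7 statements merged into one kernel-verified Lean document; each statement's English description precedes it below -/
import Mathlib

section
/- Suppose y₁, y₂ ∈ {0,1}^T satisfy W y₁ = W y₂, and set z := Σ_{t=1}^T (y₁ₜ − y₂ₜ) · (xₜᵀβ). Then for every A ∈ ℝ^{d_w}, P_{β,A}(y₁ | X) / ( P_{β,A}(y₁ | X) + P_{β,A}(y₂ | X) ) = exp(z) / (1 + exp(z)); in particular the conditional probability of y₁ given the outcome lies in {y₁, y₂} does not depend on A. -/
/-- The static logit probability of outcome `y ∈ {0,1}^T`:
`P_{β,A}(y | X) = ∏_t exp(y_t (x_tᵀβ + w_tᵀA)) / (1 + exp(x_tᵀβ + w_tᵀA))`. -/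
noncomputable def staticLogitP {T dw dx : ℕ}
    (w : Fin T → Fin dw → ℝ) (x : Fin T → Fin dx → ℝ)
    (β : Fin dx → ℝ) (A : Fin dw → ℝ) (y : Fin T → ℝ) : ℝ :=
  ∏ t, Real.exp (y t * ((∑ i, x t i * β i) + ∑ k, w t k * A k)) /
      (1 + Real.exp ((∑ i, x t i * β i) + ∑ k, w t k * A k))

/-!
In the ratio of the probabilities of two outcomes the denominators `1 + exp (x_tᵀβ + w_tᵀA)` cancel,
leaving the exponential of `∑ₜ (y₁ₜ - y₂ₜ) (x_tᵀβ + w_tᵀA)`. The fixed effect enters this exponent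
only through `(W y₁ - W y₂)ᵀA`, which vanishes when `W y₁ = W y₂`: the vector `W y` is a sufficient
statistic for `A`.
-/

open Matrix

section LogitLikelihood

variable {ι : Type*} [Fintype ι]

/-- The likelihood of `y` under independent logit models with indices `η t`, that is, with success
probabilities `exp (η t) / (1 + exp (η t))`. It isolates the part of `staticLogitP` that does not
depend on how the index is built from `X`, `β`, `W` and `A`. Outcomes are encoded as real vectors,
and only for those with entries in `{0, 1}` is the value a probability. -/
noncomputable def logitLikelihood (η y : ι → ℝ) : ℝ :=
  ∏ t, Real.exp (y t * η t) / (1 + Real.exp (η t))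

lemma logitLikelihood_pos (η y : ι → ℝ) : 0 < logitLikelihood η y :=
  Finset.prod_pos fun _ _ => by positivity

lemma logitLikelihood_eq_exp_dotProduct_div (η y : ι → ℝ) :
    logitLikelihood η y = Real.exp (y ⬝ᵥ η) / ∏ t, (1 + Real.exp (η t)) := by
  rw [logitLikelihood, Finset.prod_div_distrib, ← Real.exp_sum, dotProduct]

lemma logitLikelihood_eq_exp_mul (η y₁ y₂ : ι → ℝ) :
    logitLikelihood η y₁ = Real.exp ((y₁ - y₂) ⬝ᵥ η) * logitLikelihood η y₂ := by
  rw [logitLikelihood_eq_exp_dotProduct_div, logitLikelihood_eq_exp_dotProduct_div,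
    ← mul_div_assoc, ← Real.exp_add, sub_dotProduct, sub_add_cancel]

lemma logitLikelihood_div_add (η y₁ y₂ : ι → ℝ) :
    logitLikelihood η y₁ / (logitLikelihood η y₁ + logitLikelihood η y₂) =
      Real.exp ((y₁ - y₂) ⬝ᵥ η) / (1 + Real.exp ((y₁ - y₂) ⬝ᵥ η)) := by
  rw [logitLikelihood_eq_exp_mul η y₁ y₂, ← add_one_mul,
    mul_div_mul_right _ _ (logitLikelihood_pos η y₂).ne', add_comm]

end LogitLikelihood

lemma sub_dotProduct_add_transpose_mulVec_of_mulVec_eq {R ι κ : Type*} [CommRing R] [Fintype ι]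
    [Fintype κ] {W : Matrix κ ι R} {y₁ y₂ : ι → R} (hW : W *ᵥ y₁ = W *ᵥ y₂) (u : ι → R)
    (A : κ → R) :
    (y₁ - y₂) ⬝ᵥ (u + Wᵀ *ᵥ A) = (y₁ - y₂) ⬝ᵥ u := by
  have hA : (y₁ - y₂) ⬝ᵥ (Wᵀ *ᵥ A) = 0 := by
    rw [dotProduct_mulVec, vecMul_transpose, mulVec_sub, hW, sub_self, zero_dotProduct]
  rw [dotProduct_add, hA, add_zero]

lemma staticLogitP_eq_logitLikelihood {T dw dx : ℕ} (w : Fin T → Fin dw → ℝ)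
    (x : Fin T → Fin dx → ℝ) (β : Fin dx → ℝ) (A : Fin dw → ℝ) (y : Fin T → ℝ) :
    staticLogitP w x β A y = logitLikelihood (of x *ᵥ β + of w *ᵥ A) y :=
  rfl

theorem stmt2_general {ι κ : Type*} [Fintype ι] [Fintype κ] {W : Matrix κ ι ℝ} {y₁ y₂ : ι → ℝ}
    (hW : W *ᵥ y₁ = W *ᵥ y₂) (u : ι → ℝ) (A : κ → ℝ) :
    logitLikelihood (u + Wᵀ *ᵥ A) y₁ /
        (logitLikelihood (u + Wᵀ *ᵥ A) y₁ + logitLikelihood (u + Wᵀ *ᵥ A) y₂) =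
      Real.exp ((y₁ - y₂) ⬝ᵥ u) / (1 + Real.exp ((y₁ - y₂) ⬝ᵥ u)) := by
  rw [logitLikelihood_div_add, sub_dotProduct_add_transpose_mulVec_of_mulVec_eq hW]

/-- If `y₁, y₂ ∈ {0,1}^T` satisfy `W y₁ = W y₂` and
`z = Σ_t (y₁ₜ - y₂ₜ)(x_tᵀβ)`, then for every `A`,
`P_{β,A}(y₁|X) / (P_{β,A}(y₁|X) + P_{β,A}(y₂|X)) = exp z / (1 + exp z)`;
in particular the conditional probability of `y₁` given `{y₁,y₂}` does not depend on `A`. -/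
theorem stmt2 {T dw dx : ℕ} (hT : 1 ≤ T) (hdw : 1 ≤ dw) (hdx : 1 ≤ dx)
    (w : Fin T → Fin dw → ℝ) (x : Fin T → Fin dx → ℝ) (β : Fin dx → ℝ)
    (y₁ y₂ : Fin T → ℝ)
    (hy₁ : ∀ t, y₁ t = 0 ∨ y₁ t = 1) (hy₂ : ∀ t, y₂ t = 0 ∨ y₂ t = 1)
    (hW : ∀ k, ∑ t, w t k * y₁ t = ∑ t, w t k * y₂ t)
    (z : ℝ) (hz : z = ∑ t, (y₁ t - y₂ t) * (∑ i, x t i * β i)) :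
    ∀ A : Fin dw → ℝ,
      staticLogitP w x β A y₁ / (staticLogitP w x β A y₁ + staticLogitP w x β A y₂) =
        Real.exp z / (1 + Real.exp z) := by
  intro A
  simp only [hz, staticLogitP_eq_logitLikelihood]
  exact stmt2_general (W := (of w)ᵀ) (funext hW) (of x *ᵥ β) A
end

section
/- Let y, ỹ ∈ {0,1}^T be two outcome sequences such that: (i) Σ_{t=1}^T w_t y_t = Σ_{t=1}^T w_t ỹ_t in ℝ^{d_w}; and (ii) the multiset of pairs { (w_t, π_t(y_{t−1},…,y_1)) : t = 2,…,T } equals the multiset { (w_t, π_t(ỹ_{t−1},…,ỹ_1)) : t = 2,…,T }. Then for every A ∈ ℝ^{d_w}, P(y | A) / P(ỹ | A) = exp( Σ_{t=1}^T [ y_t π_t(y_{t−1},…,y_1) − ỹ_t π_t(ỹ_{t−1},…,ỹ_1) ] ); in particular this ratio does not depend on A. -/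
/-- The history `(y_{t-1},…,y_1)` of an outcome sequence `y` before time `t`
(0-indexed: the restriction of `y` to indices `< t`). -/
def hist {T : ℕ} (y : Fin T → ℝ) (t : Fin T) : Fin t.val → ℝ :=
  fun s => y ⟨s.val, s.isLt.trans t.isLt⟩

/-- The dynamic logit probability of `y ∈ {0,1}^T` given the fixed effect `A`:
`P(y | A) = ∏_t exp(y_t (π_t(y^{t-1}) + w_tᵀA)) / (1 + exp(π_t(y^{t-1}) + w_tᵀA))`. -/
noncomputable def dynLogitP {T dw : ℕ}
    (w : Fin T → Fin dw → ℝ) (π : (t : Fin T) → (Fin t.val → ℝ) → ℝ)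
    (A : Fin dw → ℝ) (y : Fin T → ℝ) : ℝ :=
  ∏ t, Real.exp (y t * (π t (hist y t) + ∑ k, w t k * A k)) /
      (1 + Real.exp (π t (hist y t) + ∑ k, w t k * A k))

/-!
Since `exp (y η) / (1 + exp η)` has a denominator free of `y`, a product of logit factors is
`exp (∑ y_t η_t)` divided by a symmetric function of the indices `η_t = π_t(y^{t-1}) + w_tᵀA`.
Equality of the multisets of pairs `(w_t, π_t)` makes the denominators of `P(y|A)` and `P(y'|A)`
cancel for every `A` (the pair at the first time agrees anyway, its history being empty), and in
the numerators `A` enters only through `(∑ w_t y_t)ᵀA`, which also cancels.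
-/

open Matrix

section Logit

variable {ι ι' κ : Type*} [Fintype ι] [Fintype ι'] [Fintype κ]

/-- The joint logit probability of the outcomes `y` given their indices `η`; in the dynamic model
`η` is evaluated along the history of `y`. The outcomes are real numbers, and the value is a
probability when they are all `0` or `1`. -/
noncomputable def logitProb (η y : ι → ℝ) : ℝ :=
  ∏ i, Real.exp (y i * η i) / (1 + Real.exp (η i))

theorem logitProb_eq_exp_dotProduct_div (η y : ι → ℝ) :
    logitProb η y = Real.exp (y ⬝ᵥ η) / ∏ i, (1 + Real.exp (η i)) := by
  rw [logitProb, Finset.prod_div_distrib, ← Real.exp_sum, dotProduct]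

theorem logitProb_div_logitProb {η : ι → ℝ} {η' : ι' → ℝ}
    (h : Finset.univ.val.map η = Finset.univ.val.map η') (y : ι → ℝ) (y' : ι' → ℝ) :
    logitProb η y / logitProb η' y' = Real.exp (y ⬝ᵥ η - y' ⬝ᵥ η') := by
  have hprod : ∏ i, (1 + Real.exp (η i)) = ∏ i, (1 + Real.exp (η' i)) := by
    simpa only [Finset.prod_eq_multiset_prod, Multiset.map_map, Function.comp_def] using
      congrArg (fun m : Multiset ℝ => (m.map fun x => 1 + Real.exp x).prod) h
  have hne : ∏ i, (1 + Real.exp (η' i)) ≠ 0 := by positivity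
  rw [logitProb_eq_exp_dotProduct_div, logitProb_eq_exp_dotProduct_div, hprod,
    div_div_div_cancel_right₀ hne, Real.exp_sub]

theorem logitProb_add_mulVec_div_logitProb_add_mulVec
    {W : Matrix ι κ ℝ} {W' : Matrix ι' κ ℝ} {b y : ι → ℝ} {b' y' : ι' → ℝ}
    (hstat : y ᵥ* W = y' ᵥ* W')
    (hmap : Finset.univ.val.map (fun i => (W i, b i)) =
      Finset.univ.val.map (fun i => (W' i, b' i)))
    (A : κ → ℝ) :
    logitProb (b + W *ᵥ A) y / logitProb (b' + W' *ᵥ A) y' =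
      Real.exp (y ⬝ᵥ b - y' ⬝ᵥ b') := by
  have hindex : Finset.univ.val.map (b + W *ᵥ A) = Finset.univ.val.map (b' + W' *ᵥ A) := by
    have hcomp := congrArg (Multiset.map fun p : (κ → ℝ) × ℝ => p.2 + p.1 ⬝ᵥ A) hmap
    rw [Multiset.map_map, Multiset.map_map] at hcomp
    exact hcomp
  rw [logitProb_div_logitProb hindex, dotProduct_add, dotProduct_add, dotProduct_mulVec,
    dotProduct_mulVec, hstat, add_sub_add_right_eq_sub]

end Logit

theorem map_eq_map_of_map_filter_eq {α β : Type*} {s : Multiset α} (p : α → Prop)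
    [DecidablePred p] {f g : α → β}
    (hp : (s.filter p).map f = (s.filter p).map g) (hnp : ∀ a ∈ s, ¬ p a → f a = g a) :
    s.map f = s.map g := by
  have hcompl : (s.filter (¬ p ·)).map f = (s.filter (¬ p ·)).map g :=
    Multiset.map_congr rfl fun a ha =>
      hnp a (Multiset.mem_filter.mp ha).1 (Multiset.mem_filter.mp ha).2
  rw [← Multiset.filter_add_not p s, Multiset.map_add, Multiset.map_add, hp, hcompl]

theorem hist_eq_of_val_eq_zero {T : ℕ} (y y' : Fin T → ℝ) {t : Fin T} (ht : t.val = 0) :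
    hist y t = hist y' t :=
  funext fun s => absurd s.isLt (by omega)

theorem dynLogitP_eq_logitProb {T dw : ℕ}
    (w : Fin T → Fin dw → ℝ) (π : (t : Fin T) → (Fin t.val → ℝ) → ℝ)
    (A : Fin dw → ℝ) (y : Fin T → ℝ) :
    dynLogitP w π A y = logitProb ((fun t => π t (hist y t)) + Matrix.of w *ᵥ A) y :=
  rfl

theorem stmt4_general {T dw : ℕ}
    (w : Fin T → Fin dw → ℝ) (π : (t : Fin T) → (Fin t.val → ℝ) → ℝ)
    (y y' : Fin T → ℝ)
    (h1 : ∀ k, ∑ t, w t k * y t = ∑ t, w t k * y' t)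
    (h2 : ((Finset.univ.filter (fun t : Fin T => t.val ≠ 0)).val.map
            (fun t => (w t, π t (hist y t)))) =
          ((Finset.univ.filter (fun t : Fin T => t.val ≠ 0)).val.map
            (fun t => (w t, π t (hist y' t)))))
    (A : Fin dw → ℝ) :
    dynLogitP w π A y / dynLogitP w π A y' =
      Real.exp (∑ t, (y t * π t (hist y t) - y' t * π t (hist y' t))) := by
  have hstat : y ᵥ* Matrix.of w = y' ᵥ* Matrix.of w := by
    ext k
    simpa only [vecMul, dotProduct, of_apply, mul_comm] using h1 k
  have hmap : Finset.univ.val.map (fun t => (w t, π t (hist y t))) =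
      Finset.univ.val.map (fun t => (w t, π t (hist y' t))) :=
    map_eq_map_of_map_filter_eq _ h2 fun t _ ht => by
      rw [hist_eq_of_val_eq_zero y y' (not_not.mp ht)]
  rw [dynLogitP_eq_logitProb, dynLogitP_eq_logitProb,
    logitProb_add_mulVec_div_logitProb_add_mulVec hstat hmap, Finset.sum_sub_distrib]
  rfl

/-- Let `y, y' ∈ {0,1}^T` satisfy (i) `Σ_t w_t y_t = Σ_t w_t y'_t` and
(ii) the multiset `{(w_t, π_t(y^{t-1})) : t = 2,…,T}` equals the multiset
`{(w_t, π_t(y'^{t-1})) : t = 2,…,T}`. Then for every `A ∈ ℝ^{d_w}`,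
`P(y|A)/P(y'|A) = exp(Σ_t [y_t π_t(y^{t-1}) - y'_t π_t(y'^{t-1})])`;
in particular the ratio does not depend on `A`. -/
theorem stmt4 {T dw : ℕ} (hT : 1 ≤ T) (hdw : 1 ≤ dw)
    (w : Fin T → Fin dw → ℝ) (π : (t : Fin T) → (Fin t.val → ℝ) → ℝ)
    (y y' : Fin T → ℝ)
    (hy : ∀ t, y t = 0 ∨ y t = 1) (hy' : ∀ t, y' t = 0 ∨ y' t = 1)
    (h1 : ∀ k, ∑ t, w t k * y t = ∑ t, w t k * y' t)
    (h2 : ((Finset.univ.filter (fun t : Fin T => t.val ≠ 0)).val.map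
            (fun t => (w t, π t (hist y t)))) =
          ((Finset.univ.filter (fun t : Fin T => t.val ≠ 0)).val.map
            (fun t => (w t, π t (hist y' t))))) :
    ∀ A : Fin dw → ℝ,
      dynLogitP w π A y / dynLogitP w π A y' =
        Real.exp (∑ t, (y t * π t (hist y t) - y' t * π t (hist y' t))) :=
  stmt4_general w π y y' h1 h2
end

section
/- Suppose each weight vector w_t ∈ ℝ^{d_w} (t = 1,…,T) is a standard basis vector, say w_t = e_{j_t} with j_t ∈ {1,…,d_w}. Let y_0 ∈ {0,1} be fixed and let y, ỹ ∈ {0,1}^T (with the convention ỹ_0 := y_0) satisfy Σ_{t=1}^T w_t y_t = Σ_{t=1}^T w_t ỹ_t and Σ_{t=1}^T w_t y_{t−1} = Σ_{t=1}^T w_t ỹ_{t−1}. Then the multiset of pairs { (j_t, y_{t−1}) : t = 2,…,T } equals the multiset { (j_t, ỹ_{t−1}) : t = 2,…,T }. -/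
/-- The lagged outcome `y_{t-1}` (with fixed initial value `y₀` at `t = 1`),
0-indexed in `t`. -/
def ylag {T : ℕ} (y0 : ℝ) (y : Fin T → ℝ) (t : Fin T) : ℝ :=
  if t.val = 0 then y0
  else y ⟨t.val - 1, lt_of_le_of_lt (Nat.sub_le _ _) t.isLt⟩

/-!
Since `w_t = e_{j_t}`, the `k`-th coordinate of `Σ_t w_t y_{t-1}` is the sum of `y_{t-1}` over the
`t` with `j_t = k`. Its contribution from `t = 1` depends only on `y_0`, so the sums over the `t ≥ 2`
with `j_t = k` agree as well, and a multiset of zeros and ones is determined by its cardinality and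
its sum.
-/

section Multiset

variable {α β κ : Type*}

theorem exists_eq_replicate_add_replicate {a b : α} {m : Multiset α}
    (hm : ∀ x ∈ m, x = a ∨ x = b) :
    ∃ p q, m = Multiset.replicate p a + Multiset.replicate q b := by
  classical
  have h_ne : ∀ x ∈ m.filter (· ≠ a), x = b := fun x hx =>
    have ⟨hxm, hxa⟩ := Multiset.mem_filter.1 hx
    (hm x hxm).resolve_left hxa
  refine ⟨m.count a, (m.filter (· ≠ a)).card, ?_⟩
  rw [← Multiset.filter_eq', ← Multiset.eq_replicate_card.2 h_ne, Multiset.filter_add_not]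

theorem eq_of_card_eq_of_sum_eq_of_zero_or_one {R : Type*} [AddCommMonoidWithOne R] [CharZero R]
    {m n : Multiset R} (hm : ∀ x ∈ m, x = 0 ∨ x = 1) (hn : ∀ x ∈ n, x = 0 ∨ x = 1)
    (hcard : m.card = n.card) (hsum : m.sum = n.sum) : m = n := by
  obtain ⟨p, q, rfl⟩ := exists_eq_replicate_add_replicate hm
  obtain ⟨p', q', rfl⟩ := exists_eq_replicate_add_replicate hn
  have hq : q = q' := by simpa using hsum
  have hp : p = p' := by simpa [hq] using hcard
  rw [hp, hq]

theorem count_map_prodMk [DecidableEq κ] [DecidableEq β] (s : Multiset α) (j : α → κ) (f : α → β)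
    (k : κ) (b : β) :
    (s.map fun t => (j t, f t)).count (k, b) = ((s.filter (j · = k)).map f).count b := by
  simp only [Multiset.count_map, Multiset.filter_filter, Prod.mk.injEq, eq_comm (a := k), and_comm]

theorem map_prodMk_eq_map_prodMk_iff [DecidableEq κ] {s : Multiset α} {j : α → κ} {f g : α → β} :
    (s.map fun t => (j t, f t)) = s.map (fun t => (j t, g t)) ↔
      ∀ k, (s.filter (j · = k)).map f = (s.filter (j · = k)).map g := by
  classical
  simp only [Multiset.ext, Prod.forall, count_map_prodMk]

end Multiset

section Finset

variable {ι κ : Type*} [DecidableEq κ]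

theorem map_prodMk_eq_of_sum_fiber_eq {R : Type*} [AddCommMonoidWithOne R] [CharZero R]
    {s : Finset ι} {j : ι → κ} {f g : ι → R}
    (hf : ∀ t ∈ s, f t = 0 ∨ f t = 1) (hg : ∀ t ∈ s, g t = 0 ∨ g t = 1)
    (h : ∀ k, ∑ t ∈ s with j t = k, f t = ∑ t ∈ s with j t = k, g t) :
    (s.val.map fun t => (j t, f t)) = s.val.map fun t => (j t, g t) := by
  refine map_prodMk_eq_map_prodMk_iff.2 fun k =>
    eq_of_card_eq_of_sum_eq_of_zero_or_one ?_ ?_ (by simp only [Multiset.card_map]) (h k)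
  · exact Multiset.forall_mem_map_iff.2 fun t ht => hf t (Multiset.mem_of_mem_filter ht)
  · exact Multiset.forall_mem_map_iff.2 fun t ht => hg t (Multiset.mem_of_mem_filter ht)

theorem sum_single_one_mul_eq_sum_fiber {R : Type*} [NonAssocSemiring R] (s : Finset ι)
    (j : ι → κ) (f : ι → R) (k : κ) :
    ∑ t ∈ s, (Pi.single (j t) 1 : κ → R) k * f t = ∑ t ∈ s with j t = k, f t := by
  simp only [Finset.sum_filter, Pi.single_apply, ite_mul, one_mul, zero_mul, eq_comm (a := k)]

theorem sum_filter_eq_of_sum_eq {M : Type*} [AddCancelCommMonoid M] {s : Finset ι}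
    {p : ι → Prop} [DecidablePred p] {f g : ι → M} (h : ∑ t ∈ s, f t = ∑ t ∈ s, g t)
    (hfg : ∀ t ∈ s, ¬ p t → f t = g t) : ∑ t ∈ s with p t, f t = ∑ t ∈ s with p t, g t := by
  have h_not : ∑ t ∈ s with ¬ p t, f t = ∑ t ∈ s with ¬ p t, g t :=
    Finset.sum_congr rfl fun t ht => (Finset.mem_filter.1 ht).elim (hfg t)
  rw [← Finset.sum_filter_add_sum_filter_not s p f, ← Finset.sum_filter_add_sum_filter_not s p g,
    h_not] at h
  exact add_right_cancel h

end Finset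

section Lag

variable {T : ℕ} {y0 : ℝ} {y : Fin T → ℝ} {t : Fin T}

theorem ylag_of_val_eq_zero (ht : t.val = 0) : ylag y0 y t = y0 :=
  if_pos ht

theorem ylag_eq_zero_or_one (hy : ∀ t, y t = 0 ∨ y t = 1) (ht : t.val ≠ 0) :
    ylag y0 y t = 0 ∨ ylag y0 y t = 1 := by
  rw [ylag, if_neg ht]
  exact hy _

end Lag

theorem stmt5_general {T : ℕ} {κ : Type*} [DecidableEq κ] (w : Fin T → κ → ℝ) (j : Fin T → κ)
    (hw : ∀ t, w t = Pi.single (j t) 1) (y0 : ℝ) (y y' : Fin T → ℝ)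
    (hy : ∀ t, y t = 0 ∨ y t = 1) (hy' : ∀ t, y' t = 0 ∨ y' t = 1)
    (h : ∀ k, ∑ t, w t k * ylag y0 y t = ∑ t, w t k * ylag y0 y' t) :
    ((Finset.univ.filter (fun t : Fin T => t.val ≠ 0)).val.map
        (fun t => (j t, ylag y0 y t))) =
      ((Finset.univ.filter (fun t : Fin T => t.val ≠ 0)).val.map
        (fun t => (j t, ylag y0 y' t))) := by
  refine map_prodMk_eq_of_sum_fiber_eq
    (fun t ht => ylag_eq_zero_or_one hy (Finset.mem_filter.1 ht).2)
    (fun t ht => ylag_eq_zero_or_one hy' (Finset.mem_filter.1 ht).2) fun k => ?_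
  have h_fiber : ∑ t with j t = k, ylag y0 y t = ∑ t with j t = k, ylag y0 y' t := by
    simpa only [hw, sum_single_one_mul_eq_sum_fiber] using h k
  rw [Finset.filter_comm]
  refine sum_filter_eq_of_sum_eq h_fiber fun t _ ht => ?_
  have ht0 : t.val = 0 := not_not.1 ht
  rw [ylag_of_val_eq_zero ht0, ylag_of_val_eq_zero ht0]

/-- Suppose each weight vector `w_t` is a standard basis vector
`e_{j_t}` of `ℝ^{d_w}`. If the binary sequences `y, y'` (with common initial value
`y₀`) satisfy `Σ_t w_t y_t = Σ_t w_t y'_t` and `Σ_t w_t y_{t-1} = Σ_t w_t y'_{t-1}`,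
then the multiset `{(j_t, y_{t-1}) : t = 2,…,T}` equals the multiset
`{(j_t, y'_{t-1}) : t = 2,…,T}`. -/
theorem stmt5 {T dw : ℕ} (hT : 1 ≤ T) (hdw : 1 ≤ dw)
    (w : Fin T → Fin dw → ℝ) (j : Fin T → Fin dw)
    (hw : ∀ t, w t = Pi.single (j t) 1)
    (y0 : ℝ) (hy0 : y0 = 0 ∨ y0 = 1)
    (y y' : Fin T → ℝ)
    (hy : ∀ t, y t = 0 ∨ y t = 1) (hy' : ∀ t, y' t = 0 ∨ y' t = 1)
    (h1 : ∀ k, ∑ t, w t k * y t = ∑ t, w t k * y' t)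
    (h2 : ∀ k, ∑ t, w t k * ylag y0 y t = ∑ t, w t k * ylag y0 y' t) :
    ((Finset.univ.filter (fun t : Fin T => t.val ≠ 0)).val.map
        (fun t => (j t, ylag y0 y t))) =
      ((Finset.univ.filter (fun t : Fin T => t.val ≠ 0)).val.map
        (fun t => (j t, ylag y0 y' t))) :=
  stmt5_general w j hw y0 y y' hy hy' h2
end

section
/- For each t ∈ {1,…,T} let Q_t be the cardinality of the image of π_t (the number of distinct values π_t takes on {0,1}^{t−1}), and define D := { Σ_{t=1}^T k_t w_t : k_t ∈ {0,1,…,Q_t} for each t } ⊂ ℝ^{d_w}. Let M := { m : {0,1}^T → ℝ : for every A ∈ ℝ^{d_w}, Σ_{y ∈ {0,1}^T} m(y) · P(y | A) = 0 }, a linear subspace of the 2^T-dimensional real vector space of functions {0,1}^T → ℝ. Then dim_ℝ M ≥ 2^T − |D|, where |D| denotes the (finite) cardinality of D. -/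
/-- Conversion of a binary outcome sequence to a real vector. -/
def toR {T : ℕ} (y : Fin T → Bool) : Fin T → ℝ := fun t => if y t then 1 else 0

/-- `Q_t`: the number of distinct values taken by `π_t` on binary histories. -/
noncomputable def Qval {T : ℕ} (π : (t : Fin T) → (Fin t.val → ℝ) → ℝ) (t : Fin T) : ℕ :=
  (Finset.univ.image
    (fun h : Fin t.val → Bool => π t (fun s => if h s then (1 : ℝ) else 0))).card

/-- The set `D = {Σ_t k_t w_t : k_t ∈ {0,1,…,Q_t}} ⊆ ℝ^{d_w}`. -/
noncomputable def Dset {T dw : ℕ} (w : Fin T → Fin dw → ℝ)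
    (π : (t : Fin T) → (Fin t.val → ℝ) → ℝ) : Finset (Fin dw → ℝ) :=
  Finset.image
    (fun k : (t : Fin T) → Fin (Qval π t + 1) => ∑ t, ((k t : ℕ) : ℝ) • w t)
    Finset.univ

/-- The space `M` of fixed-effect-free moment functions `m : {0,1}^T → ℝ`, i.e. those
with `Σ_y m(y) P(y|A) = 0` for every `A ∈ ℝ^{d_w}`, realized as the kernel of the
linear map `m ↦ (A ↦ Σ_y m(y) P(y|A))`. -/
noncomputable def Mspace {T dw : ℕ} (w : Fin T → Fin dw → ℝ)
    (π : (t : Fin T) → (Fin t.val → ℝ) → ℝ) :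
    Submodule ℝ ((Fin T → Bool) → ℝ) :=
  LinearMap.ker
    (({ toFun := fun m => fun A : Fin dw → ℝ =>
          ∑ y : Fin T → Bool, m y * dynLogitP w π A (toR y)
        map_add' := by
          intro m m'
          funext A
          simp [add_mul, Finset.sum_add_distrib]
        map_smul' := by
          intro c m
          funext A
          simp [Finset.mul_sum, mul_assoc] } :
      ((Fin T → Bool) → ℝ) →ₗ[ℝ] ((Fin dw → ℝ) → ℝ)))

/-!
Put `e_t A = exp (w_t ⬝ A)`. Multiplying `P(y | A)` by the product over `t` of
`1 + exp (v + w_t ⬝ A)` for the `Q_t` values `v` of `π_t` clears its denominator and leaves, for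
each `t`, a product of `Q_t` factors that are affine in `e_t`. The result therefore lies in
`∏ t, (span {1, e_t}) ^ Q_t`, which is spanned by the monomials `∏ t, e_t ^ k_t` with `k_t ≤ Q_t`,
and such a monomial is `A ↦ exp (d ⬝ A)` with `d = ∑ t, k_t • w_t ∈ D`. The common denominator
does not depend on `y` and has no zero, so `M` is the space of linear relations among `2 ^ T`
functions in a span of `|D|` functions.
-/

section LinearRelations

theorem card_sub_card_le_finrank_ker_linearCombination {K V ι κ : Type*} [DivisionRing K]
    [AddCommGroup V] [Module K V] [Fintype ι] [Fintype κ] {v : ι → V} {u : κ → V}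
    (h : ∀ i, v i ∈ Submodule.span K (Set.range u)) :
    Fintype.card ι - Fintype.card κ ≤
      Module.finrank K (LinearMap.ker (Fintype.linearCombination K v)) := by
  have hrange : LinearMap.range (Fintype.linearCombination K v) ≤
      Submodule.span K (Set.range u) := by
    rw [Fintype.range_linearCombination, Submodule.span_le]
    exact Set.range_subset_iff.mpr h
  have hle : Module.finrank K (LinearMap.range (Fintype.linearCombination K v)) ≤
      Fintype.card κ :=
    have := FiniteDimensional.span_of_finite K (Set.finite_range u)
    (Submodule.finrank_mono hrange).trans (finrank_range_le_card u)
  have hrank := (Fintype.linearCombination K v).finrank_range_add_finrank_ker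
  rw [Module.finrank_fintype_fun_eq_card] at hrank
  omega

theorem ker_linearCombination_mul_right {R A ι : Type*} [CommSemiring R] [Semiring A]
    [Algebra R A] [Fintype ι] (v : ι → A) {a : A} (ha : IsUnit a) :
    LinearMap.ker (Fintype.linearCombination R fun i => v i * a) =
      LinearMap.ker (Fintype.linearCombination R v) := by
  ext c
  simp only [LinearMap.mem_ker, Fintype.linearCombination_apply, ← smul_mul_assoc,
    ← Finset.sum_mul, ha.mul_left_eq_zero]

end LinearRelations

section SpanPow

open scoped Pointwise

theorem finsetProd_mem_finsetProd_submodule {R A ι : Type*} [CommSemiring R] [CommSemiring A]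
    [Algebra R A] (s : Finset ι) {N : ι → Submodule R A} {x : ι → A} (h : ∀ i ∈ s, x i ∈ N i) :
    ∏ i ∈ s, x i ∈ ∏ i ∈ s, N i := by
  induction s using Finset.cons_induction with
  | empty => exact Submodule.one_le.mp le_rfl
  | cons i s hi ih =>
    rw [Finset.prod_cons, Finset.prod_cons]
    exact Submodule.mul_mem_mul (h i (Finset.mem_cons_self i s))
      (ih fun j hj => h j (Finset.mem_cons_of_mem hj))

theorem pair_one_pow_eq_range {M : Type*} [Monoid M] (a : M) (n : ℕ) :
    ({1, a} : Set M) ^ n = Set.range fun k : Fin (n + 1) => a ^ (k : ℕ) := by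
  induction n with
  | zero => simp [Set.range_unique, Set.singleton_one]
  | succ n ih =>
    ext b
    rw [pow_succ, ih, Set.mem_mul]
    constructor
    · rintro ⟨_, ⟨k, rfl⟩, _, rfl | rfl, rfl⟩
      · exact ⟨k.castSucc, by simp⟩
      · exact ⟨k.succ, by simp [pow_succ]⟩
    · rintro ⟨k, rfl⟩
      induction k using Fin.lastCases with
      | last => exact ⟨a ^ n, ⟨Fin.last n, by simp⟩, a, by simp, by simp [pow_succ]⟩
      | cast k => exact ⟨a ^ (k : ℕ), ⟨k, rfl⟩, 1, by simp, by simp⟩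

theorem prod_span_pair_one_pow {R A ι : Type*} [CommSemiring R] [CommSemiring A] [Algebra R A]
    [Fintype ι] (a : ι → A) (n : ι → ℕ) :
    ∏ i, Submodule.span R {1, a i} ^ n i =
      Submodule.span R (Set.range fun k : (i : ι) → Fin (n i + 1) => ∏ i, a i ^ (k i : ℕ)) := by
  simp only [Submodule.span_pow, Submodule.prod_span, pair_one_pow_eq_range]
  congr 1
  ext b
  simp only [Set.mem_fintype_prod, Set.mem_range]
  constructor
  · rintro ⟨g, hg, rfl⟩
    choose k hk using hg
    exact ⟨k, Finset.prod_congr rfl fun i _ => hk i⟩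
  · rintro ⟨k, rfl⟩
    exact ⟨_, fun i => ⟨k i, rfl⟩, rfl⟩

end SpanPow

section Logit

theorem logit_mul_prod_mem_span_pow {E : Type*} (x : E → ℝ) {V : Finset ℝ} {p : ℝ} (hp : p ∈ V)
    (b : Bool) :
    (fun A => Real.exp ((if b then 1 else 0) * (p + x A)) / (1 + Real.exp (p + x A)) *
        ∏ v ∈ V, (1 + Real.exp (v + x A))) ∈
      Submodule.span ℝ {1, fun A => Real.exp (x A)} ^ V.card := by
  have hnum : (fun A => Real.exp ((if b then 1 else 0) * (p + x A))) ∈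
      Submodule.span ℝ {1, fun A => Real.exp (x A)} := by
    cases b
    · exact Submodule.mem_span_pair.mpr ⟨1, 0, by ext; simp⟩
    · exact Submodule.mem_span_pair.mpr ⟨0, Real.exp p, by ext; simp [Real.exp_add]⟩
  have hdenom (v : ℝ) : (fun A => 1 + Real.exp (v + x A)) ∈
      Submodule.span ℝ {1, fun A => Real.exp (x A)} :=
    Submodule.mem_span_pair.mpr ⟨1, Real.exp v, by ext; simp [Real.exp_add]⟩
  have hcancel : (fun A => Real.exp ((if b then 1 else 0) * (p + x A)) /
        (1 + Real.exp (p + x A)) * ∏ v ∈ V, (1 + Real.exp (v + x A))) =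
      (fun A => Real.exp ((if b then 1 else 0) * (p + x A))) *
        ∏ v ∈ V.erase p, fun A => 1 + Real.exp (v + x A) := by
    ext A
    rw [← Finset.mul_prod_erase V _ hp, ← mul_assoc, div_mul_cancel₀ _ (by positivity),
      Pi.mul_apply, Finset.prod_apply]
  rw [hcancel, ← Finset.card_erase_add_one hp, pow_succ', ← Finset.prod_const]
  exact Submodule.mul_mem_mul hnum (finsetProd_mem_finsetProd_submodule _ fun v _ => hdenom v)

/-- The exponential function `A ↦ exp (d ⬝ A)` with frequency vector `d`; for `d ∈ D` these span a
space containing every `P(y | ·)` once denominators are cleared. -/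
noncomputable def expDot {n : Type*} [Fintype n] (d : n → ℝ) : (n → ℝ) → ℝ :=
  fun A => Real.exp (d ⬝ᵥ A)

theorem prod_expDot_pow {n ι : Type*} [Fintype n] (s : Finset ι) (w : ι → n → ℝ) (k : ι → ℕ) :
    ∏ t ∈ s, expDot (w t) ^ k t = expDot (∑ t ∈ s, (k t : ℝ) • w t) := by
  ext A
  simp only [expDot, Finset.prod_apply, Pi.pow_apply, sum_dotProduct, smul_dotProduct,
    smul_eq_mul, Real.exp_sum, Real.exp_nat_mul]

end Logit

section MomentFunctions

variable {T dw : ℕ} (w : Fin T → Fin dw → ℝ) (π : (t : Fin T) → (Fin t.val → ℝ) → ℝ)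

theorem Mspace_eq_ker_linearCombination :
    Mspace w π =
      LinearMap.ker (Fintype.linearCombination ℝ fun y A => dynLogitP w π A (toR y)) := by
  ext m
  simp only [Mspace, LinearMap.mem_ker, LinearMap.coe_mk, AddHom.coe_mk, funext_iff,
    Fintype.linearCombination_apply, Finset.sum_apply, Pi.smul_apply, smul_eq_mul]

/-- The finite set of values of `π_t` on binary histories; its cardinality is `Q_t`. -/
noncomputable def indexValues (t : Fin T) : Finset ℝ :=
  Finset.univ.image fun h : Fin t.val → Bool => π t fun s => if h s then (1 : ℝ) else 0

variable {π} in
theorem index_hist_mem_indexValues (y : Fin T → Bool) (t : Fin T) :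
    π t (hist (toR y) t) ∈ indexValues π t :=
  Finset.mem_image_of_mem _ (Finset.mem_univ fun s : Fin t.val => y ⟨s, s.isLt.trans t.isLt⟩)

/-- The common denominator of the probabilities `P(y | A)`, `y ∈ {0,1}^T`, as a function of `A`: it
has one factor for each time `t` and each value of `π_t`. -/
noncomputable def commonDenom : (Fin dw → ℝ) → ℝ :=
  fun A => ∏ t, ∏ v ∈ indexValues π t, (1 + Real.exp (v + w t ⬝ᵥ A))

theorem isUnit_commonDenom : IsUnit (commonDenom w π) :=
  Pi.isUnit_iff.mpr fun _ => IsUnit.mk0 _ <| ne_of_gt <|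
    Finset.prod_pos fun _ _ => Finset.prod_pos fun _ _ => by positivity

theorem dynLogitP_mul_commonDenom_mem_prod_span_pow (y : Fin T → Bool) :
    (fun A => dynLogitP w π A (toR y)) * commonDenom w π ∈
      ∏ t, Submodule.span ℝ {1, expDot (w t)} ^ Qval π t := by
  have hfactor : (fun A => dynLogitP w π A (toR y)) * commonDenom w π = ∏ t, fun A =>
      Real.exp (toR y t * (π t (hist (toR y) t) + w t ⬝ᵥ A)) /
        (1 + Real.exp (π t (hist (toR y) t) + w t ⬝ᵥ A)) *
          ∏ v ∈ indexValues π t, (1 + Real.exp (v + w t ⬝ᵥ A)) := by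
    ext A
    rw [Finset.prod_apply, Finset.prod_mul_distrib]
    rfl
  rw [hfactor]
  exact finsetProd_mem_finsetProd_submodule _ fun t _ =>
    logit_mul_prod_mem_span_pow (fun A => w t ⬝ᵥ A) (index_hist_mem_indexValues y t) (y t)

theorem prod_span_expDot_pow :
    ∏ t, Submodule.span ℝ {1, expDot (w t)} ^ Qval π t =
      Submodule.span ℝ (Set.range fun d : Dset w π => expDot (d : Fin dw → ℝ)) := by
  rw [prod_span_pair_one_pow]
  congr 1
  ext f
  simp [prod_expDot_pow, Dset]

end MomentFunctions

/-- The dimension of the space of fixed-effect-free moment functions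
is at least `2^T - |D|`. -/
theorem stmt8 {T dw : ℕ} (hT : 1 ≤ T) (hdw : 1 ≤ dw)
    (w : Fin T → Fin dw → ℝ) (π : (t : Fin T) → (Fin t.val → ℝ) → ℝ) :
    2 ^ T - (Dset w π).card ≤ Module.finrank ℝ (Mspace w π) := by
  have hmem (y : Fin T → Bool) : (fun A => dynLogitP w π A (toR y)) * commonDenom w π ∈
      Submodule.span ℝ (Set.range fun d : Dset w π => expDot (d : Fin dw → ℝ)) :=
    prod_span_expDot_pow w π ▸ dynLogitP_mul_commonDenom_mem_prod_span_pow w π y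
  rw [Mspace_eq_ker_linearCombination,
    ← ker_linearCombination_mul_right _ (isUnit_commonDenom w π)]
  simpa using card_sub_card_le_finrank_ker_linearCombination hmem
end

section
/- Consider the AR(2) panel logit model with T = 3 and initial conditions y_{−1} = 0, y_0 = 0: for γ₁, γ₂, A ∈ ℝ and y = (y₁,y₂,y₃) ∈ {0,1}³ define P(y | A) := ∏_{t=1}^3 exp(y_t (γ₁ y_{t−1} + γ₂ y_{t−2} + A)) / (1 + exp(γ₁ y_{t−1} + γ₂ y_{t−2} + A)), using the fixed initial values. Define m : {0,1}³ → ℝ by m(0,1,1) = exp(−γ₁), m(0,1,0) = 1, m(1,0,0) = m(1,0,1) = −1, and m(y) = 0 for all other y. Then for every A ∈ ℝ, Σ_{y ∈ {0,1}³} m(y) · P(y | A) = 0. -/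
/-- Conversion of a binary value to a real number. -/
def b2r (x : Bool) : ℝ := if x then 1 else 0

/-- Single-period logit factor: probability of outcome `yt ∈ {0,1}` when the index is
`u`, i.e. `exp(yt · u) / (1 + exp u)`. -/
noncomputable def logitFactor (u yt : ℝ) : ℝ := Real.exp (yt * u) / (1 + Real.exp u)

/-- AR(2) panel logit probability with `T = 3` and initial conditions
`y₋₁ = 0, y₀ = 0`: `P(y|A) = ∏_{t=1}^3 exp(y_t (γ₁ y_{t-1} + γ₂ y_{t-2} + A)) /
(1 + exp(γ₁ y_{t-1} + γ₂ y_{t-2} + A))`. -/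
noncomputable def P12 (γ1 γ2 A : ℝ) (y : Bool × Bool × Bool) : ℝ :=
  logitFactor (γ1 * 0 + γ2 * 0 + A) (b2r y.1) *
    logitFactor (γ1 * b2r y.1 + γ2 * 0 + A) (b2r y.2.1) *
    logitFactor (γ1 * b2r y.2.1 + γ2 * b2r y.1 + A) (b2r y.2.2)

/-- The moment function: `m(0,1,1) = exp(-γ₁)`, `m(0,1,0) = 1`,
`m(1,0,·) = -1`, and `m = 0` otherwise. -/
noncomputable def m12 (γ1 : ℝ) (y : Bool × Bool × Bool) : ℝ :=
  if y = (false, true, true) then Real.exp (-γ1)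
  else if y = (false, true, false) then 1
  else if y.1 = true ∧ y.2.1 = false then -1
  else 0

/-!
Write `p u` and `q u` for the probabilities `logitFactor u 1` and `logitFactor u 0`. On the paths
with `y₁ = 0, y₂ = 1`, averaging the weight `exp (-γ₁ y₃)` over `y₃` shifts the index `γ₁ + A`
back to `A` in the numerator of `p + q`: the average is `(1 + exp A) / (1 + exp (γ₁ + A))`, that
is `q (γ₁ + A) / q A`. The denominator cancels the factor `q A` of the first period,
leaving `p A * q (γ₁ + A)`, which is exactly the probability of `y₁ = 1, y₂ = 0`, where the moment
function is `-1` whatever `y₃` is.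
-/

theorem logitFactor_pos (u y : ℝ) : 0 < logitFactor u y := by
  unfold logitFactor
  positivity

theorem exp_mul_logitFactor_one_add_logitFactor_zero (c u : ℝ) :
    Real.exp c * logitFactor u 1 + logitFactor u 0 =
      logitFactor u 0 / logitFactor (c + u) 0 := by
  simp only [logitFactor, one_mul, zero_mul, Real.exp_zero, Real.exp_add]
  field_simp
  ring

theorem logitFactor_one_add_logitFactor_zero (u : ℝ) :
    logitFactor u 1 + logitFactor u 0 = 1 := by
  simpa [(logitFactor_pos u 0).ne'] using exp_mul_logitFactor_one_add_logitFactor_zero 0 u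

theorem sum_m12_mul_P12 (γ1 γ2 A : ℝ) :
    ∑ y : Bool × Bool × Bool, m12 γ1 y * P12 γ1 γ2 A y =
      logitFactor A 0 * logitFactor A 1 *
          (Real.exp (-γ1) * logitFactor (γ1 + A) 1 + logitFactor (γ1 + A) 0) -
        logitFactor A 1 * logitFactor (γ1 + A) 0 *
          (logitFactor (γ2 + A) 1 + logitFactor (γ2 + A) 0) := by
  simp only [m12, P12, b2r, Fintype.sum_prod_type, Fintype.sum_bool, Prod.mk.injEq,
    Bool.true_eq_false, Bool.false_eq_true, and_true, and_false, ↓reduceIte, mul_zero,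
    mul_one, zero_mul, one_mul, add_zero, zero_add, neg_mul]
  ring

/-- In the AR(2) panel logit model with `T = 3` and initial
conditions `y₋₁ = 0, y₀ = 0`, the function `m12` is a valid fixed-effect-free moment
function: `Σ_{y ∈ {0,1}³} m(y) P(y|A) = 0` for every `A ∈ ℝ`. -/
theorem stmt12 (γ1 γ2 : ℝ) :
    ∀ A : ℝ, ∑ y : Bool × Bool × Bool, m12 γ1 y * P12 γ1 γ2 A y = 0 := by
  intro A
  have mean_exp_weight : Real.exp (-γ1) * logitFactor (γ1 + A) 1 + logitFactor (γ1 + A) 0 =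
      logitFactor (γ1 + A) 0 / logitFactor A 0 := by
    simpa only [neg_add_cancel_left] using
      exp_mul_logitFactor_one_add_logitFactor_zero (-γ1) (γ1 + A)
  have first_period_cancels : logitFactor A 0 * logitFactor A 1 *
      (logitFactor (γ1 + A) 0 / logitFactor A 0) = logitFactor A 1 * logitFactor (γ1 + A) 0 := by
    have := (logitFactor_pos A 0).ne'
    field_simp
  rw [sum_m12_mul_P12, mean_exp_weight, first_period_cancels,
    logitFactor_one_add_logitFactor_zero, mul_one, sub_self]
end

section
/- Consider the AR(2) panel logit model with T = 3 and initial conditions y_{−1} = 0, y_0 = 1: for γ₁, γ₂, A ∈ ℝ and y = (y₁,y₂,y₃) ∈ {0,1}³ define P(y | A) := ∏_{t=1}^3 exp(y_t (γ₁ y_{t−1} + γ₂ y_{t−2} + A)) / (1 + exp(γ₁ y_{t−1} + γ₂ y_{t−2} + A)), using the fixed initial values. Define m : {0,1}³ → ℝ by m(1,0,0) = exp(γ₂ − γ₁), m(1,0,1) = exp(γ₂), m(0,1,0) = m(0,1,1) = −1, and m(y) = 0 for all other y. Then for every A ∈ ℝ, Σ_{y ∈ {0,1}³} m(y) · P(y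 | A) = 0. -/
/-- AR(2) panel logit probability with `T = 3` and initial conditions
`y₋₁ = 0, y₀ = 1`: `P(y|A) = ∏_{t=1}^3 exp(y_t (γ₁ y_{t-1} + γ₂ y_{t-2} + A)) /
(1 + exp(γ₁ y_{t-1} + γ₂ y_{t-2} + A))`. -/
noncomputable def P13 (γ1 γ2 A : ℝ) (y : Bool × Bool × Bool) : ℝ :=
  logitFactor (γ1 * 1 + γ2 * 0 + A) (b2r y.1) *
    logitFactor (γ1 * b2r y.1 + γ2 * 1 + A) (b2r y.2.1) *
    logitFactor (γ1 * b2r y.2.1 + γ2 * b2r y.1 + A) (b2r y.2.2)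

/-- The moment function: `m(1,0,0) = exp(γ₂ - γ₁)`, `m(1,0,1) = exp(γ₂)`,
`m(0,1,·) = -1`, and `m = 0` otherwise. -/
noncomputable def m13 (γ1 γ2 : ℝ) (y : Bool × Bool × Bool) : ℝ :=
  if y = (true, false, false) then Real.exp (γ2 - γ1)
  else if y = (true, false, true) then Real.exp γ2
  else if y.1 = false ∧ y.2.1 = true then -1
  else 0

/-!
Write `u = γ₁ + A`, `v = γ₁ + γ₂ + A`, `w = γ₂ + A`. The path `(1, 0, ·)` meets the indices
`u, v, w` and the path `(0, 1, ·)` meets `u, w, u`. The moment function weighs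
`(1, 0, 1)` by `exp γ₁ = exp (v - w)` relative to `(1, 0, 0)`; this tilt replaces the total mass `1`
of the third outcome by `(1 + exp v) / (1 + exp w)`, which cancels the denominator of the second
period. What is left is an exchange of the outcomes `1` and `0` between the indices `u` and `w`, at
the odds ratio `exp (w - u) = exp (γ₂ - γ₁)`, in which `A` no longer occurs.
-/

section LogitFactor

variable (u v w : ℝ)

lemma logitFactor_zero : logitFactor u 0 = (1 + Real.exp u)⁻¹ := by
  rw [logitFactor, zero_mul, Real.exp_zero, one_div]

lemma logitFactor_one_eq_exp_mul : logitFactor u 1 = Real.exp u * logitFactor u 0 := by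
  rw [logitFactor_zero, logitFactor, one_mul, div_eq_mul_inv]

lemma logitFactor_zero_ne_zero : logitFactor u 0 ≠ 0 := by
  rw [logitFactor_zero]
  positivity

lemma logitFactor_zero_add_exp_sub_mul_one :
    logitFactor u 0 + Real.exp (v - u) * logitFactor u 1 = logitFactor u 0 / logitFactor v 0 := by
  have exp_shift : Real.exp (v - u) * Real.exp u = Real.exp v := by
    rw [← Real.exp_add, sub_add_cancel]
  calc logitFactor u 0 + Real.exp (v - u) * logitFactor u 1
      = logitFactor u 0 * (1 + Real.exp (v - u) * Real.exp u) := by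
        rw [logitFactor_one_eq_exp_mul]
        ring
    _ = logitFactor u 0 / logitFactor v 0 := by
        rw [exp_shift, logitFactor_zero v, div_inv_eq_mul]

lemma logitFactor_zero_add_one : logitFactor u 0 + logitFactor u 1 = 1 := by
  simpa only [sub_self, Real.exp_zero, one_mul, div_self (logitFactor_zero_ne_zero u)] using
    logitFactor_zero_add_exp_sub_mul_one u u

lemma exp_sub_mul_logitFactor_one_mul_zero :
    Real.exp (w - u) * (logitFactor u 1 * logitFactor w 0) =
      logitFactor u 0 * logitFactor w 1 := by
  rw [logitFactor_one_eq_exp_mul, logitFactor_one_eq_exp_mul, Real.exp_sub]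
  field_simp

lemma exp_sub_mul_logitFactor_path :
    Real.exp (w - u) * (logitFactor u 1 * logitFactor v 0 *
      (logitFactor w 0 + Real.exp (v - w) * logitFactor w 1)) =
      logitFactor u 0 * logitFactor w 1 := by
  rw [logitFactor_zero_add_exp_sub_mul_one, mul_assoc (logitFactor u 1),
    mul_div_cancel₀ _ (logitFactor_zero_ne_zero v), exp_sub_mul_logitFactor_one_mul_zero]

end LogitFactor

section PanelLogit

variable (γ1 γ2 A : ℝ)

lemma b2r_false : b2r false = 0 := if_neg Bool.false_ne_true

lemma b2r_true : b2r true = 1 := if_pos rfl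

lemma sum_m13_mul (f : Bool × Bool × Bool → ℝ) :
    ∑ y, m13 γ1 γ2 y * f y =
      Real.exp (γ2 - γ1) * f (true, false, false) + Real.exp γ2 * f (true, false, true) -
        (f (false, true, false) + f (false, true, true)) := by
  simp only [Fintype.sum_prod_type, Fintype.sum_bool, m13, Prod.mk.injEq, reduceCtorEq, and_true,
    and_false, if_true, if_false]
  ring

lemma P13_true_false (y : Bool) :
    P13 γ1 γ2 A (true, false, y) =
      logitFactor (γ1 + A) 1 * logitFactor (γ1 + γ2 + A) 0 * logitFactor (γ2 + A) (b2r y) := by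
  simp [P13, b2r_false, b2r_true]

lemma P13_false_true (y : Bool) :
    P13 γ1 γ2 A (false, true, y) =
      logitFactor (γ1 + A) 0 * logitFactor (γ2 + A) 1 * logitFactor (γ1 + A) (b2r y) := by
  simp [P13, b2r_false, b2r_true]

lemma P13_false_true_add :
    P13 γ1 γ2 A (false, true, false) + P13 γ1 γ2 A (false, true, true) =
      logitFactor (γ1 + A) 0 * logitFactor (γ2 + A) 1 := by
  rw [P13_false_true, P13_false_true, ← mul_add, b2r_false, b2r_true,
    logitFactor_zero_add_one, mul_one]

lemma exp_mul_P13_true_false_add :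
    Real.exp (γ2 - γ1) * P13 γ1 γ2 A (true, false, false) +
        Real.exp γ2 * P13 γ1 γ2 A (true, false, true) =
      logitFactor (γ1 + A) 0 * logitFactor (γ2 + A) 1 := by
  have exp_γ2 : Real.exp γ2 = Real.exp (γ2 - γ1) * Real.exp γ1 := by
    rw [← Real.exp_add, sub_add_cancel]
  have w_sub_u : γ2 + A - (γ1 + A) = γ2 - γ1 := by ring
  have v_sub_w : γ1 + γ2 + A - (γ2 + A) = γ1 := by ring
  have path := exp_sub_mul_logitFactor_path (γ1 + A) (γ1 + γ2 + A) (γ2 + A)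
  rw [w_sub_u, v_sub_w] at path
  rw [← path, P13_true_false, P13_true_false, exp_γ2, b2r_false, b2r_true]
  ring

end PanelLogit

/-- In the AR(2) panel logit model with `T = 3` and initial
conditions `y₋₁ = 0, y₀ = 1`, the function `m13` is a valid fixed-effect-free moment
function: `Σ_{y ∈ {0,1}³} m(y) P(y|A) = 0` for every `A ∈ ℝ`. -/
theorem stmt13 (γ1 γ2 : ℝ) :
    ∀ A : ℝ, ∑ y : Bool × Bool × Bool, m13 γ1 γ2 y * P13 γ1 γ2 A y = 0 := by
  intro A
  rw [sum_m13_mul, exp_mul_P13_true_false_add, P13_false_true_add, sub_self]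
end

section
/- Consider the AR(2) logit model with general fixed effects: fix γ₁, γ₂ ∈ ℝ, weight vectors w_1,…,w_T ∈ ℝ^{d_w} each of which is a standard basis vector, and fixed initial values y_{−1}, y_0 ∈ {0,1}; for y ∈ {0,1}^T (extended by these initial values) and A ∈ ℝ^{d_w}, define P(y | A) := ∏_{t=1}^T exp(y_t (γ₁ y_{t−1} + γ₂ y_{t−2} + w_tᵀA)) / (1 + exp(γ₁ y_{t−1} + γ₂ y_{t−2} + w_tᵀA)). Let y, ỹ ∈ {0,1}^T (with the same initial values) satisfy the four conditions: Σ_{t=1}^T w_t y_t = Σ_{t=1}^T w_t ỹ_t, Σ_{t=1}^T w_t y_{t−1} = Σ_{t=1}^T w_t ỹ_{t−1}, Σ_{t=1}^T w_t y_{t−2} = Σ_{t=1}^T w_t ỹ_{t−2}, and Σ_{t=1}^T w_t y_{t−1} y_{t−2} = Σ_{t=1}^T w_t ỹ_{t−1} ỹ_{t−2}, with T ≥ 2. Then: (a) y_{T−1} = ỹ_{T−1} and y_T = ỹ_T; (b) Σ_{t=1}^T y_t y_{t−1} = Σ_{t=1}^T ỹ_t ỹ_{t−1}; and (c) for every A ∈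 ℝ^{d_w}, P(y | A) / P(ỹ | A) = exp( γ₂ Σ_{t=1}^T ( y_t y_{t−2} − ỹ_t ỹ_{t−2} ) ), which depends neither on A nor on γ₁. -/
/-- The first lag `y_{t-1}`, with fixed initial value `y₀` at `t = 1` (0-indexed). -/
def lag1 {T : ℕ} (y0 : ℝ) (y : Fin T → ℝ) (t : Fin T) : ℝ :=
  if t.val = 0 then y0
  else y ⟨t.val - 1, lt_of_le_of_lt (Nat.sub_le _ _) t.isLt⟩

/-- The second lag `y_{t-2}`, with fixed initial values `y₋₁` at `t = 1` and `y₀` at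
`t = 2` (0-indexed). -/
def lag2 {T : ℕ} (ym1 y0 : ℝ) (y : Fin T → ℝ) (t : Fin T) : ℝ :=
  if t.val = 0 then ym1
  else if t.val = 1 then y0
  else y ⟨t.val - 2, lt_of_le_of_lt (Nat.sub_le _ _) t.isLt⟩

/-- The AR(2) logit probability with general fixed effects:
`P(y|A) = ∏_t exp(y_t (γ₁ y_{t-1} + γ₂ y_{t-2} + w_tᵀA)) /
(1 + exp(γ₁ y_{t-1} + γ₂ y_{t-2} + w_tᵀA))`. -/
noncomputable def ar2PW {T dw : ℕ} (γ1 γ2 : ℝ) (w : Fin T → Fin dw → ℝ)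
    (ym1 y0 : ℝ) (A : Fin dw → ℝ) (y : Fin T → ℝ) : ℝ :=
  ∏ t, Real.exp (y t * (γ1 * lag1 y0 y t + γ2 * lag2 ym1 y0 y t + ∑ k, w t k * A k)) /
      (1 + Real.exp (γ1 * lag1 y0 y t + γ2 * lag2 ym1 y0 y t + ∑ k, w t k * A k))

/-!
Linear independence of the distinct weights lets an equality of two `w`-weighted sums pass to the
sums weighted by any function of `w t`. Taking a constant function gives the unweighted equalities,
and since lagging a sequence only trades its last term for the initial value, these give (a) and
(b). For (c), every function of two binary lags is a polynomial in them with monomials `1`, `a`,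
`b`, `a * b`, so the four conditions fix the sum of any function of `(w t, y (t-1), y (t-2))`, in
particular the logarithm of the product of the denominators `1 + exp (⋯)`.
-/

section WeightedSums

lemma linearIndepOn_range_of_eq_single {ι κ R : Type*} [Semiring R] [Finite κ]
    [DecidableEq κ] {w : ι → κ → R} (hw : ∀ t, ∃ j, w t = Pi.single j 1) :
    LinearIndepOn R id (Set.range w) := by
  refine (Pi.linearIndependent_single_one κ R).linearIndepOn_id.mono ?_
  rintro _ ⟨t, rfl⟩
  obtain ⟨j, hj⟩ := hw t
  exact ⟨j, hj.symm⟩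

variable {ι R M V : Type*} [Fintype ι]

lemma sum_smul_apply_eq_of_linearIndepOn [Semiring R] [AddCommMonoid M] [Module R M]
    [AddCommMonoid V] [Module R V] {w : ι → V} (hw : LinearIndepOn R id (Set.range w))
    {f g : ι → R} (h : ∑ t, f t • w t = ∑ t, g t • w t) (B : V → M) :
    ∑ t, f t • B (w t) = ∑ t, g t • B (w t) := by
  have hsupp (c : ι → R) :
      ∑ t, Finsupp.single (w t) (c t) ∈ Finsupp.supported R R (Set.range w) :=
    Submodule.sum_mem _ fun t _ => Finsupp.single_mem_supported R _ (Set.mem_range_self t)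
  have hsingle : ∑ t, Finsupp.single (w t) (f t) = ∑ t, Finsupp.single (w t) (g t) :=
    linearIndepOn_iffₛ.mp hw _ (hsupp f) _ (hsupp g) (by simpa using h)
  simpa using congrArg (Finsupp.linearCombination R B) hsingle

lemma sum_eq_of_sum_smul_eq [Semiring R] [AddCommMonoid V] [Module R V] {w : ι → V}
    (hw : LinearIndepOn R id (Set.range w)) {f g : ι → R}
    (h : ∑ t, f t • w t = ∑ t, g t • w t) : ∑ t, f t = ∑ t, g t := by
  simpa using sum_smul_apply_eq_of_linearIndepOn hw h fun _ => (1 : R)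

lemma apply_eq_of_mem_zero_one [Ring R] [AddCommGroup M] [Module R M] (F : R → R → M) {a b : R}
    (ha : a ∈ ({0, 1} : Set R)) (hb : b ∈ ({0, 1} : Set R)) :
    F a b = F 0 0 + a • (F 1 0 - F 0 0) + b • (F 0 1 - F 0 0) +
      (a * b) • (F 1 1 - F 1 0 - F 0 1 + F 0 0) := by
  rcases ha with rfl | rfl <;> rcases hb with rfl | rfl <;>
    simp only [mul_zero, mul_one, zero_smul, one_smul] <;> abel

lemma sum_apply_eq_of_mem_zero_one [Ring R] [AddCommGroup M] [Module R M] [AddCommMonoid V]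
    [Module R V] {w : ι → V} (hw : LinearIndepOn R id (Set.range w)) {a b a' b' : ι → R}
    (ha : ∀ t, a t ∈ ({0, 1} : Set R)) (hb : ∀ t, b t ∈ ({0, 1} : Set R))
    (ha' : ∀ t, a' t ∈ ({0, 1} : Set R)) (hb' : ∀ t, b' t ∈ ({0, 1} : Set R))
    (hsum_a : ∑ t, a t • w t = ∑ t, a' t • w t) (hsum_b : ∑ t, b t • w t = ∑ t, b' t • w t)
    (hsum_ab : ∑ t, (a t * b t) • w t = ∑ t, (a' t * b' t) • w t) (F : V → R → R → M) :
    ∑ t, F (w t) (a t) (b t) = ∑ t, F (w t) (a' t) (b' t) := by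
  rw [Finset.sum_congr rfl fun t _ => apply_eq_of_mem_zero_one (F (w t)) (ha t) (hb t),
    Finset.sum_congr rfl fun t _ => apply_eq_of_mem_zero_one (F (w t)) (ha' t) (hb' t)]
  simp only [Finset.sum_add_distrib]
  rw [sum_smul_apply_eq_of_linearIndepOn hw hsum_a fun v => F v 1 0 - F v 0 0,
    sum_smul_apply_eq_of_linearIndepOn hw hsum_b fun v => F v 0 1 - F v 0 0,
    sum_smul_apply_eq_of_linearIndepOn hw hsum_ab fun v => F v 1 1 - F v 1 0 - F v 0 1 + F v 0 0]

lemma sum_smul_eq_of_forall_sum_mul_eq [CommSemiring R] {κ : Type*} {w : ι → κ → R} {f g : ι → R}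
    (h : ∀ k, ∑ t, w t k * f t = ∑ t, w t k * g t) : ∑ t, f t • w t = ∑ t, g t • w t := by
  ext k
  simpa [mul_comm] using h k

end WeightedSums

section Lags

lemma lag2_eq_lag1_lag1 {T : ℕ} (ym1 y0 : ℝ) (y : Fin T → ℝ) :
    lag2 ym1 y0 y = lag1 ym1 (lag1 y0 y) := by
  funext t
  unfold lag2 lag1
  split_ifs
  all_goals first | rfl | (dsimp only at *; omega)

lemma lag1_mem {T : ℕ} {s : Set ℝ} {c : ℝ} {u : Fin T → ℝ} (hc : c ∈ s) (hu : ∀ t, u t ∈ s)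
    (t : Fin T) : lag1 c u t ∈ s := by
  unfold lag1
  split_ifs
  exacts [hc, hu _]

lemma lag1_mul {T : ℕ} (c d : ℝ) (u v : Fin T → ℝ) (t : Fin T) :
    lag1 (c * d) (fun s => u s * v s) t = lag1 c u t * lag1 d v t := by
  unfold lag1
  split_ifs <;> rfl

variable {n : ℕ}

lemma lag1_zero (c : ℝ) (u : Fin (n + 1) → ℝ) : lag1 c u 0 = c := rfl

lemma lag1_succ (c : ℝ) (u : Fin (n + 1) → ℝ) (i : Fin n) : lag1 c u i.succ = u i.castSucc := rfl

lemma sum_lag1_add_last (c : ℝ) (u : Fin (n + 1) → ℝ) :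
    ∑ t, lag1 c u t + u (Fin.last n) = c + ∑ t, u t := by
  rw [Fin.sum_univ_succ, Fin.sum_univ_castSucc (f := u)]
  simp only [lag1_zero, lag1_succ, add_assoc]

lemma sum_eq_iff_last_eq_of_sum_lag1_eq {c : ℝ} {u v : Fin (n + 1) → ℝ}
    (h : ∑ t, lag1 c u t = ∑ t, lag1 c v t) :
    ∑ t, u t = ∑ t, v t ↔ u (Fin.last n) = v (Fin.last n) := by
  rw [← add_right_inj c, ← sum_lag1_add_last, ← sum_lag1_add_last, h, add_right_inj]

variable {ym1 y0 : ℝ}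

lemma lag1_last_eq_of_sum_lag_eq {y y' : Fin (n + 1) → ℝ}
    (h1 : ∑ t, lag1 y0 y t = ∑ t, lag1 y0 y' t)
    (h2 : ∑ t, lag2 ym1 y0 y t = ∑ t, lag2 ym1 y0 y' t) :
    lag1 y0 y (Fin.last n) = lag1 y0 y' (Fin.last n) := by
  simp only [lag2_eq_lag1_lag1] at h2
  exact (sum_eq_iff_last_eq_of_sum_lag1_eq h2).mp h1

lemma sum_mul_lag1_eq_of_sum_lag_eq {y y' : Fin (n + 1) → ℝ}
    (h0 : ∑ t, y t = ∑ t, y' t)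
    (h1 : ∑ t, lag1 y0 y t = ∑ t, lag1 y0 y' t)
    (h2 : ∑ t, lag2 ym1 y0 y t = ∑ t, lag2 ym1 y0 y' t)
    (h12 : ∑ t, lag1 y0 y t * lag2 ym1 y0 y t = ∑ t, lag1 y0 y' t * lag2 ym1 y0 y' t) :
    ∑ t, y t * lag1 y0 y t = ∑ t, y' t * lag1 y0 y' t := by
  simp only [lag2_eq_lag1_lag1, ← lag1_mul] at h12
  refine (sum_eq_iff_last_eq_of_sum_lag1_eq h12).mpr ?_
  rw [(sum_eq_iff_last_eq_of_sum_lag1_eq h1).mp h0, lag1_last_eq_of_sum_lag_eq h1 h2]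

end Lags

section Likelihood

variable {T dw : ℕ}

/-- The log-partition function `log (1 + exp (γ₁ a + γ₂ b + vᵀA))` of one period of the AR(2)
logit model with lags `a`, `b` and weight vector `v`: the logarithm of a denominator in `ar2PW`. -/
noncomputable def ar2LogPartition (γ1 γ2 : ℝ) (A v : Fin dw → ℝ) (a b : ℝ) : ℝ :=
  Real.log (1 + Real.exp (γ1 * a + γ2 * b + ∑ k, v k * A k))

lemma ar2PW_eq_exp (γ1 γ2 : ℝ) (w : Fin T → Fin dw → ℝ) (ym1 y0 : ℝ) (A : Fin dw → ℝ)
    (y : Fin T → ℝ) :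
    ar2PW γ1 γ2 w ym1 y0 A y =
      Real.exp (γ1 * ∑ t, y t * lag1 y0 y t + γ2 * ∑ t, y t * lag2 ym1 y0 y t +
        ∑ t, y t * ∑ k, w t k * A k -
        ∑ t, ar2LogPartition γ1 γ2 A (w t) (lag1 y0 y t) (lag2 ym1 y0 y t)) := by
  rw [Finset.mul_sum, Finset.mul_sum, ← Finset.sum_add_distrib, ← Finset.sum_add_distrib,
    ← Finset.sum_sub_distrib, Real.exp_sum, ar2PW]
  refine Finset.prod_congr rfl fun t _ => ?_
  rw [Real.exp_sub, ar2LogPartition, Real.exp_log (by positivity)]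
  congr 2
  ring

lemma ar2PW_div_ar2PW_eq_exp {γ1 γ2 ym1 y0 : ℝ} {w : Fin T → Fin dw → ℝ} {A : Fin dw → ℝ}
    {y y' : Fin T → ℝ}
    (hlag : ∑ t, y t * lag1 y0 y t = ∑ t, y' t * lag1 y0 y' t)
    (hfixed : ∑ t, y t * ∑ k, w t k * A k = ∑ t, y' t * ∑ k, w t k * A k)
    (hpart : ∑ t, ar2LogPartition γ1 γ2 A (w t) (lag1 y0 y t) (lag2 ym1 y0 y t) =
      ∑ t, ar2LogPartition γ1 γ2 A (w t) (lag1 y0 y' t) (lag2 ym1 y0 y' t)) :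
    ar2PW γ1 γ2 w ym1 y0 A y / ar2PW γ1 γ2 w ym1 y0 A y' =
      Real.exp (γ2 * ∑ t, (y t * lag2 ym1 y0 y t - y' t * lag2 ym1 y0 y' t)) := by
  rw [ar2PW_eq_exp, ar2PW_eq_exp, ← Real.exp_sub, hlag, hfixed, hpart, Finset.sum_sub_distrib]
  ring_nf

end Likelihood

theorem stmt15_general {T dw : ℕ} (hT : 2 ≤ T) (γ1 γ2 : ℝ) {w : Fin T → Fin dw → ℝ}
    (hw : LinearIndepOn ℝ id (Set.range w)) {ym1 y0 : ℝ}
    (hym1 : ym1 ∈ ({0, 1} : Set ℝ)) (hy0 : y0 ∈ ({0, 1} : Set ℝ)) {y y' : Fin T → ℝ}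
    (hy : ∀ t, y t ∈ ({0, 1} : Set ℝ)) (hy' : ∀ t, y' t ∈ ({0, 1} : Set ℝ))
    (h1 : ∑ t, y t • w t = ∑ t, y' t • w t)
    (h2 : ∑ t, lag1 y0 y t • w t = ∑ t, lag1 y0 y' t • w t)
    (h3 : ∑ t, lag2 ym1 y0 y t • w t = ∑ t, lag2 ym1 y0 y' t • w t)
    (h4 : ∑ t, (lag1 y0 y t * lag2 ym1 y0 y t) • w t =
      ∑ t, (lag1 y0 y' t * lag2 ym1 y0 y' t) • w t) :
    (y ⟨T - 2, by omega⟩ = y' ⟨T - 2, by omega⟩ ∧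
      y ⟨T - 1, by omega⟩ = y' ⟨T - 1, by omega⟩) ∧
    (∑ t, y t * lag1 y0 y t = ∑ t, y' t * lag1 y0 y' t) ∧
    (∀ A : Fin dw → ℝ,
      ar2PW γ1 γ2 w ym1 y0 A y / ar2PW γ1 γ2 w ym1 y0 A y' =
        Real.exp (γ2 * ∑ t, (y t * lag2 ym1 y0 y t - y' t * lag2 ym1 y0 y' t))) := by
  obtain ⟨n, rfl⟩ : ∃ n, T = n + 2 := ⟨T - 2, by omega⟩
  have hsum := sum_eq_of_sum_smul_eq hw h1
  have hsum_lag1 := sum_eq_of_sum_smul_eq hw h2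
  have hsum_lag2 := sum_eq_of_sum_smul_eq hw h3
  have hlag := sum_mul_lag1_eq_of_sum_lag_eq hsum hsum_lag1 hsum_lag2
    (sum_eq_of_sum_smul_eq hw h4)
  have hlag1 {u : Fin (n + 2) → ℝ} (hu : ∀ t, u t ∈ ({0, 1} : Set ℝ)) := lag1_mem hy0 hu
  have hlag2 {u : Fin (n + 2) → ℝ} (hu : ∀ t, u t ∈ ({0, 1} : Set ℝ)) (t) :
      lag2 ym1 y0 u t ∈ ({0, 1} : Set ℝ) :=
    lag2_eq_lag1_lag1 ym1 y0 u ▸ lag1_mem hym1 (hlag1 hu) t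
  refine ⟨⟨lag1_last_eq_of_sum_lag_eq hsum_lag1 hsum_lag2,
    (sum_eq_iff_last_eq_of_sum_lag1_eq hsum_lag1).mp hsum⟩, hlag, fun A => ?_⟩
  exact ar2PW_div_ar2PW_eq_exp hlag
    (sum_smul_apply_eq_of_linearIndepOn hw h1 fun v => ∑ k, v k * A k)
    (sum_apply_eq_of_mem_zero_one hw (hlag1 hy) (hlag2 hy) (hlag1 hy') (hlag2 hy') h2 h3 h4
      (ar2LogPartition γ1 γ2 A))

/-- In the AR(2) logit model with standard-basis weight vectors,
fixed initial values `y₋₁, y₀ ∈ {0,1}` and `T ≥ 2`, if `y, y'` satisfy the four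
conditions `Σ_t w_t y_t = Σ_t w_t y'_t`, `Σ_t w_t y_{t-1} = Σ_t w_t y'_{t-1}`,
`Σ_t w_t y_{t-2} = Σ_t w_t y'_{t-2}` and
`Σ_t w_t y_{t-1} y_{t-2} = Σ_t w_t y'_{t-1} y'_{t-2}`, then:
(a) `y_{T-1} = y'_{T-1}` and `y_T = y'_T`;
(b) `Σ_t y_t y_{t-1} = Σ_t y'_t y'_{t-1}`; and
(c) for every `A`, `P(y|A)/P(y'|A) = exp(γ₂ Σ_t (y_t y_{t-2} - y'_t y'_{t-2}))`,
which depends neither on `A` nor on `γ₁`. -/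
theorem stmt15 {T dw : ℕ} (hT : 2 ≤ T) (hdw : 1 ≤ dw)
    (γ1 γ2 : ℝ) (w : Fin T → Fin dw → ℝ)
    (hw : ∀ t, ∃ j : Fin dw, w t = Pi.single j 1)
    (ym1 y0 : ℝ) (hym1 : ym1 = 0 ∨ ym1 = 1) (hy0 : y0 = 0 ∨ y0 = 1)
    (y y' : Fin T → ℝ)
    (hy : ∀ t, y t = 0 ∨ y t = 1) (hy' : ∀ t, y' t = 0 ∨ y' t = 1)
    (h1 : ∀ k, ∑ t, w t k * y t = ∑ t, w t k * y' t)
    (h2 : ∀ k, ∑ t, w t k * lag1 y0 y t = ∑ t, w t k * lag1 y0 y' t)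
    (h3 : ∀ k, ∑ t, w t k * lag2 ym1 y0 y t = ∑ t, w t k * lag2 ym1 y0 y' t)
    (h4 : ∀ k, ∑ t, w t k * (lag1 y0 y t * lag2 ym1 y0 y t) =
      ∑ t, w t k * (lag1 y0 y' t * lag2 ym1 y0 y' t)) :
    (y ⟨T - 2, by omega⟩ = y' ⟨T - 2, by omega⟩ ∧
      y ⟨T - 1, by omega⟩ = y' ⟨T - 1, by omega⟩) ∧
    (∑ t, y t * lag1 y0 y t = ∑ t, y' t * lag1 y0 y' t) ∧
    (∀ A : Fin dw → ℝ,
      ar2PW γ1 γ2 w ym1 y0 A y / ar2PW γ1 γ2 w ym1 y0 A y' =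
        Real.exp (γ2 * ∑ t, (y t * lag2 ym1 y0 y t - y' t * lag2 ym1 y0 y' t))) := by
  exact stmt15_general hT γ1 γ2 (linearIndepOn_range_of_eq_single hw) hym1 hy0 hy hy'
    (sum_smul_eq_of_forall_sum_mul_eq h1) (sum_smul_eq_of_forall_sum_mul_eq h2)
    (sum_smul_eq_of_forall_sum_mul_eq h3) (sum_smul_eq_of_forall_sum_mul_eq h4)
end
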